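/- Let h and d be positive integers with h > d + 2. The system consisting of the commutative law xy = yx, the identity Φ_{h,d}: x^d x_1 ⋯ x_h = x_1 ⋯ x_h (with x, x_1, …, x_h distinct letters), and the identities Ψ_{h,d,r}: x^r y^{r+d} x_1 ⋯ x_{h−3r−d} = x^{r+d} y^r x_1 ⋯ x_{h−3r−d} for r = 1, …, ⌊(h−d)/3⌋ (with x, y, x_1, …, x_{h−3r−d} distinct letters; the tail is empty when h − 3r − d = 0) is an identity basis for the finite cyclic semigroup C_{h,d} = ⟨a | a^h = a^{h+d}⟩. That is: C_{h,d} satisfies every identity of the system, and every identity u = v satisfied by C_{h,d} is satisfied by every semigroup that satisfies all identities of the system. -/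

import Mathlib

/-!
Words are evaluated under weights of the letters. In `C_{h,d}` an identity `u = v` holds iff for
all positive weights the total weights of `u` and `v` are equal, or both at least `h` and congruent
modulo `d` (`satisfiesId_cyc_iff`). Test weights turn this into conditions on letter counts: all
counts agree modulo `d` (`count_modEq`), and (`long_or_short`) either both words have length at
least `h`, or they have a common length `n < h` and every letter whose counts differ occurs at
least `k = h - n` times in both words.

Conversely, in a commutative semigroup satisfying the system, values of words depend only on letter
multisets; products are computed in `WithOne S`, so that remainders of words may be empty. In the
long case, `Φ` allows `d` copies of any letter to be inserted, so both words equal the join of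
their multisets (`prod_eq_of_le`). In the short case with `u ≠ v`, some `x` occurs more often in `v`
and some `y` more often in `u`, each by at least `d`. Hence `u` contains `x^k y^(k+d)`, and the
remaining `n - 2k - d = h - 3k - d` letters match exactly the tail of `Ψ` with `r = k`. Applying it
moves `u` closer to `v` without affecting the conditions, so induction applies
(`prod_eq_of_short`).
-/


/-- Words over the countably infinite alphabet `ℕ`: elements of the free semigroup. -/
abbrev Word : Type := FreeSemigroup ℕ

/-- The list of letters of a word. -/
def Word.toList (w : Word) : List ℕ := w.head :: w.tail

/-- `occ x w`: the number of occurrences of the letter `x` in the word `w`. -/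
def occ (x : ℕ) (w : Word) : ℕ := w.toList.count x

/-- `wlen w`: the length of the word `w`. -/
def wlen (w : Word) : ℕ := w.toList.length

/-- `con w`: the content of `w`, i.e. the set of letters occurring in `w`. -/
def con (w : Word) : Set ℕ := {x | x ∈ w.toList}

/-- A semigroup `S` satisfies the identity `u = v` if every substitution
`φ : ℕ → S` gives both words equal values. -/
def SatisfiesId (S : Type*) [Semigroup S] (u v : Word) : Prop :=
  ∀ φ : ℕ → S, FreeSemigroup.lift φ u = FreeSemigroup.lift φ v

/-- Reduction of exponents in the cyclic semigroup `⟨a ∣ a^h = a^{h+d}⟩`: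
`reduce h d e` is the unique `k` with `a^k = a^e`, `1 ≤ k ≤ h + d - 1` (for `e ≥ 1`). -/
def cycReduce (h d e : ℕ) : ℕ := if e < h then e else h + (e - h) % d

/-- The carrier of the finite cyclic semigroup `C_{h,d}`:
the elements `a, a², …, a^{h+d-1}`, encoded by their exponents. -/
def Cyc (h d : ℕ) : Type := {n : ℕ // 1 ≤ n ∧ n ≤ h + d - 1}

theorem cycReduce_add_left (h d a b : ℕ) :
    cycReduce h d (cycReduce h d a + b) = cycReduce h d (a + b) := by
  unfold cycReduce
  by_cases h1 : a < h
  · simp [h1]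
  · rw [if_neg h1, if_neg (by omega : ¬ h + (a - h) % d + b < h),
      if_neg (by omega : ¬ a + b < h)]
    have e1 : h + (a - h) % d + b - h = (a - h) % d + b := by omega
    rw [e1, Nat.mod_add_mod]
    have e2 : a - h + b = a + b - h := by omega
    rw [e2]

/-- `C_{h,d}` is a semigroup: `a^i · a^j = a^{i+j}` if `i + j ≤ h + d - 1`, and
`a^i · a^j = a^k` with `h ≤ k ≤ h + d - 1`, `k ≡ i + j (mod d)` otherwise. -/
instance Cyc.instSemigroup (h d : ℕ) [Fact (0 < h)] [Fact (0 < d)] : Semigroup (Cyc h d) where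
  mul a b := ⟨cycReduce h d (a.1 + b.1), by
    have hh : 0 < h := Fact.out
    have hd : 0 < d := Fact.out
    have ha := a.2; have hb := b.2
    unfold cycReduce
    split_ifs with h1
    · omega
    · have : (a.1 + b.1 - h) % d < d := Nat.mod_lt _ hd
      omega⟩
  mul_assoc a b c := by
    apply Subtype.ext
    show cycReduce h d (cycReduce h d (a.1 + b.1) + c.1)
        = cycReduce h d (a.1 + cycReduce h d (b.1 + c.1))
    rw [cycReduce_add_left]
    conv_rhs => rw [Nat.add_comm a.1, cycReduce_add_left, Nat.add_comm]
    rw [Nat.add_assoc]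

instance : Fact (0 < 1) := ⟨Nat.one_pos⟩

/-- Left-hand side `xy` of the commutative law, with `x := 0`, `y := 1`. -/
def commLHS : Word := ⟨0, [1]⟩

/-- Right-hand side `yx` of the commutative law, with `x := 0`, `y := 1`. -/
def commRHS : Word := ⟨1, [0]⟩

/-- Left-hand side `x^d x₁ ⋯ x_h` of the identity `Φ_{h,d}`,
with the distinct letters `x := 0`, `xᵢ := i` for `i = 1, …, h`. -/
def phiLHS (h d : ℕ) : Word := ⟨0, List.replicate (d - 1) 0 ++ (List.range h).map (· + 1)⟩

/-- Right-hand side `x₁ ⋯ x_h` of the identity `Φ_{h,d}`, with `xᵢ := i`. -/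
def phiRHS (h : ℕ) : Word := ⟨1, (List.range (h - 1)).map (· + 2)⟩

/-- Left-hand side `x^r y^{r+d} x₁ ⋯ x_{h-3r-d}` of the identity `Ψ_{h,d,r}`,
with the distinct letters `x := 0`, `y := 1`, `xᵢ := i + 1`. -/
def psiLHS (h d r : ℕ) : Word :=
  ⟨0, List.replicate (r - 1) 0 ++ List.replicate (r + d) 1
      ++ (List.range (h - 3 * r - d)).map (· + 2)⟩

/-- Right-hand side `x^{r+d} y^r x₁ ⋯ x_{h-3r-d}` of the identity `Ψ_{h,d,r}`. -/
def psiRHS (h d r : ℕ) : Word :=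
  ⟨0, List.replicate (r + d - 1) 0 ++ List.replicate r 1
      ++ (List.range (h - 3 * r - d)).map (· + 2)⟩


/-! ### Values of words and of the basis identities in `WithOne S` -/

theorem lift_eq_foldl {S : Type*} [Semigroup S] (φ : ℕ → S) (w : Word) :
    FreeSemigroup.lift φ w = w.tail.foldl (fun s y => s * φ y) (φ w.head) := rfl

theorem coe_lift {S : Type*} [Semigroup S] (φ : ℕ → S) (w : Word) :
    ((FreeSemigroup.lift φ w : S) : WithOne S)
      = (w.toList.map fun x => (φ x : WithOne S)).prod := by
  have key : ∀ (l : List ℕ) (s : S), ((l.foldl (fun s y => s * φ y) s : S) : WithOne S)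
      = s * (l.map fun x => (φ x : WithOne S)).prod := by
    intro l
    induction l with
    | nil => intro s; simp
    | cons b l ih => intro s; simp [ih, WithOne.coe_mul, mul_assoc]
  rw [lift_eq_foldl, key]
  simp [Word.toList]

theorem satisfiesId_iff_withOne {S : Type*} [Semigroup S] (u v : Word) :
    SatisfiesId S u v ↔ ∀ φ : ℕ → S,
      (u.toList.map fun x => (φ x : WithOne S)).prod
        = (v.toList.map fun x => (φ x : WithOne S)).prod := by
  simp only [SatisfiesId, ← coe_lift, WithOne.coe_inj]

theorem phiLHS_toList (h d : ℕ) (hd : 0 < d) :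
    (phiLHS h d).toList = List.replicate d 0 ++ (List.range h).map (· + 1) := by
  obtain ⟨d, rfl⟩ : ∃ e, d = e + 1 := ⟨d - 1, by omega⟩
  simp [phiLHS, Word.toList, List.replicate_succ]

theorem phiRHS_toList (h : ℕ) (hh : 0 < h) :
    (phiRHS h).toList = (List.range h).map (· + 1) := by
  obtain ⟨h, rfl⟩ : ∃ e, h = e + 1 := ⟨h - 1, by omega⟩
  simp [phiRHS, Word.toList, List.range_succ_eq_map, Function.comp_def]

theorem psiLHS_toList (h d r : ℕ) (hr : 0 < r) :
    (psiLHS h d r).toList = List.replicate r 0 ++ List.replicate (r + d) 1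
      ++ (List.range (h - 3 * r - d)).map (· + 2) := by
  obtain ⟨r, rfl⟩ : ∃ e, r = e + 1 := ⟨r - 1, by omega⟩
  simp [psiLHS, Word.toList, List.replicate_succ]

theorem psiRHS_toList (h d r : ℕ) (hr : 0 < r) :
    (psiRHS h d r).toList = List.replicate (r + d) 0 ++ List.replicate r 1
      ++ (List.range (h - 3 * r - d)).map (· + 2) := by
  obtain ⟨e, he⟩ : ∃ e, r + d = e + 1 := ⟨r + d - 1, by omega⟩
  simp [psiRHS, Word.toList, he, List.replicate_succ]

/-- The instance of `Φ_{h,d}` under `x ↦ φ x`, `xᵢ ↦ φ (i-th letter of l)`. -/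
theorem phi_subst {S : Type*} [Semigroup S] {h d : ℕ} (hh : 0 < h) (hd : 0 < d)
    (H : SatisfiesId S (phiLHS h d) (phiRHS h)) (φ : ℕ → S) (x : ℕ) (l : List ℕ)
    (hl : l.length = h) :
    (φ x : WithOne S) ^ d * (l.map fun x => (φ x : WithOne S)).prod
      = (l.map fun x => (φ x : WithOne S)).prod := by
  have Hs := (satisfiesId_iff_withOne _ _).1 H
    (fun i => if i = 0 then φ x else φ (l.getD (i - 1) 0))
  rw [phiLHS_toList h d hd, phiRHS_toList h hh] at Hs
  have e : (List.range h).map (fun i => (φ (l.getD i 0) : WithOne S))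
      = l.map fun x => (φ x : WithOne S) := by
    apply List.ext_getElem <;> simp +contextual [hl]
  simpa [Function.comp_def, ← e] using Hs

/-- The instance of `Ψ_{h,d,r}` whose tail letters are sent to the values of the letters of `l`. -/
theorem psi_subst {S : Type*} [Semigroup S] {h d r : ℕ} (hr : 0 < r)
    (H : SatisfiesId S (psiLHS h d r) (psiRHS h d r)) (φ : ℕ → S) (x y : ℕ) (l : List ℕ)
    (hl : l.length = h - 3 * r - d) :
    (φ x : WithOne S) ^ r * (φ y : WithOne S) ^ (r + d) *
        (l.map fun x => (φ x : WithOne S)).prod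
      = (φ x : WithOne S) ^ (r + d) * (φ y : WithOne S) ^ r *
        (l.map fun x => (φ x : WithOne S)).prod := by
  have Hs := (satisfiesId_iff_withOne _ _).1 H
    (fun i => if i = 0 then φ x else if i = 1 then φ y else φ (l.getD (i - 2) 0))
  rw [psiLHS_toList h d r hr, psiRHS_toList h d r hr] at Hs
  have e : (List.range (h - 3 * r - d)).map (fun i => (φ (l.getD i 0) : WithOne S))
      = l.map fun x => (φ x : WithOne S) := by
    apply List.ext_getElem <;> simp +contextual [hl]
  simpa [Function.comp_def, ← e, mul_assoc] using Hs

/-! ### Derivations in a commutative monoid -/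

theorem exists_le_card_eq {A : Multiset ℕ} {h : ℕ} (hA : h ≤ A.card) :
    ∃ B ≤ A, B.card = h := by
  induction A using Quotient.inductionOn with
  | _ l =>
    refine ⟨(l.take h : List ℕ), ?_, by simpa using hA⟩
    exact Multiset.coe_le.2 (List.take_sublist h l).subperm

/-- Consequences of `Φ`: raising multiplicities by multiples of `d` in a multiset of at least `h`
letters does not change its value. The induction is on the number `n` of missing letters. -/
theorem prod_eq_of_le {M : Type*} [CommMonoid M] (g : ℕ → M) {h d : ℕ}
    (hΦ : ∀ x (l : Multiset ℕ), l.card = h → g x ^ d * (l.map g).prod = (l.map g).prod)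
    (C : Multiset ℕ) : ∀ (n : ℕ) (A : Multiset ℕ), (C - A).card = n → A ≤ C → h ≤ A.card →
      (∀ x, A.count x ≡ C.count x [MOD d]) → (A.map g).prod = (C.map g).prod := by
  intro n
  induction n using Nat.strong_induction_on with
  | _ n ih =>
    intro A hn hAC hA hmod
    by_cases hEq : A = C
    · rw [hEq]
    obtain ⟨x, hx⟩ : ∃ x, A.count x < C.count x := by
      by_contra! hcon
      exact hEq (le_antisymm hAC (Multiset.le_iff_count.2 hcon))
    have hdvd : d ∣ C.count x - A.count x := (Nat.modEq_iff_dvd' hx.le).1 (hmod x)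
    have hle : d ≤ C.count x - A.count x := Nat.le_of_dvd (by omega) hdvd
    have hd : 0 < d := Nat.pos_of_dvd_of_pos hdvd (by omega)
    have hcount : ∀ z, (A + Multiset.replicate d x).count z
        = A.count z + if z = x then d else 0 := by
      intro z; simp [Multiset.count_replicate, eq_comm]
    have hle' : A + Multiset.replicate d x ≤ C := by
      rw [Multiset.le_iff_count]
      intro z
      rw [hcount]
      have := Multiset.le_iff_count.1 hAC z
      split_ifs with hz
      · subst hz; omega
      · simpa using this
    have hprod : ((A + Multiset.replicate d x).map g).prod = (A.map g).prod := by
      obtain ⟨B, hB, hBc⟩ := exists_le_card_eq hA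
      obtain ⟨D, rfl⟩ := Multiset.le_iff_exists_add.1 hB
      have := hΦ x B hBc
      simp only [Multiset.map_add, Multiset.prod_add, Multiset.map_replicate,
        Multiset.prod_replicate]
      rw [mul_comm, ← mul_assoc, this]
    rw [← hprod]
    refine ih _ ?_ _ rfl hle' (by simp; omega) ?_
    · have h1 := Multiset.card_sub hAC
      have h2 := Multiset.card_sub hle'
      have h3 := Multiset.card_le_card hle'
      simp at h2 h3
      omega
    · intro z
      rw [hcount]
      split_ifs
      · simpa using hmod z
      · simpa using hmod z

/-- Consequences of `Ψ` among multisets of the same size `t`. If all multiplicities agree modulo `d`,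
and those that differ are at least `k` on both sides, then each application of `Ψ` trades `d`
copies of an overrepresented letter `y` for `d` copies of an underrepresented letter `x`, keeping
both multiplicities at least `k`; the number `n` of letters of `B` missing from `A` decreases.
The identity is needed only for `2 * k + d ≤ t`, which the existence of such `x` and `y` forces. -/
theorem prod_eq_of_short {M : Type*} [CommMonoid M] (g : ℕ → M) {d k t : ℕ} (hd : 0 < d)
    (hΨ : 2 * k + d ≤ t → ∀ x y (l : Multiset ℕ), l.card = t - 2 * k - d →
      g x ^ k * g y ^ (k + d) * (l.map g).prod = g x ^ (k + d) * g y ^ k * (l.map g).prod)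
    (B : Multiset ℕ) (hB : B.card = t) : ∀ (n : ℕ) (A : Multiset ℕ), (B - A).card = n →
      A.card = t → (∀ x, A.count x ≡ B.count x [MOD d]) →
      (∀ x, A.count x = B.count x ∨ (k ≤ A.count x ∧ k ≤ B.count x)) →
      (A.map g).prod = (B.map g).prod := by
  intro n
  induction n using Nat.strong_induction_on with
  | _ n ih =>
    intro A hn hA hmod hk
    by_cases hEq : A = B
    · rw [hEq]
    obtain ⟨x, hx⟩ : ∃ x, A.count x < B.count x := by
      by_contra! hcon
      exact hEq (Multiset.eq_of_le_of_card_le (Multiset.le_iff_count.2 hcon) (by omega)).symm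
    obtain ⟨y, hy⟩ : ∃ y, B.count y < A.count y := by
      by_contra! hcon
      exact hEq (Multiset.eq_of_le_of_card_le (Multiset.le_iff_count.2 hcon) (by omega))
    have hxy : x ≠ y := by rintro rfl; omega
    have hxd : d ≤ B.count x - A.count x :=
      Nat.le_of_dvd (by omega) ((Nat.modEq_iff_dvd' hx.le).1 (hmod x))
    have hyd : d ≤ A.count y - B.count y :=
      Nat.le_of_dvd (by omega) ((Nat.modEq_iff_dvd' hy.le).1 (hmod y).symm)
    have hkx := hk x
    have hky := hk y
    have hle : Multiset.replicate k x + Multiset.replicate (k + d) y ≤ A := by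
      rw [Multiset.le_iff_count]
      intro z
      simp only [Multiset.count_add, Multiset.count_replicate]
      split_ifs with h1 h2 h2
      · exact absurd (h1.trans h2.symm) hxy
      · subst h1; omega
      · subst h2; omega
      · omega
    obtain ⟨T, rfl⟩ := Multiset.le_iff_exists_add.1 hle
    -- `A₂` is the result of one application of `Ψ` to `A`.
    set A₂ := Multiset.replicate (k + d) x + Multiset.replicate k y + T with hA₂
    have hcard : 2 * k + d + T.card = t := by
      simp at hA; omega
    have hprod : ((Multiset.replicate k x + Multiset.replicate (k + d) y + T).map g).prod
        = (A₂.map g).prod := by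
      simpa [hA₂] using hΨ (by omega) x y T (by omega)
    have hc : ∀ z, (z = x ∧ A₂.count z
            = (Multiset.replicate k x + Multiset.replicate (k + d) y + T).count z + d) ∨
        (z = y ∧ A₂.count z + d
            = (Multiset.replicate k x + Multiset.replicate (k + d) y + T).count z) ∨
        (z ≠ x ∧ z ≠ y ∧ A₂.count z
            = (Multiset.replicate k x + Multiset.replicate (k + d) y + T).count z) := by
      intro z
      simp only [hA₂, Multiset.count_add, Multiset.count_replicate]
      by_cases h1 : z = x
      · subst h1; left; simp [hxy.symm]; omega
      · by_cases h2 : z = y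
        · subst h2; right; left; simp [hxy]; omega
        · right; right; simp [h1, h2, Ne.symm h1, Ne.symm h2]
    -- Only the counts matter from here on, so the decomposition of `A` is forgotten.
    generalize Multiset.replicate k x + Multiset.replicate (k + d) y + T = A at *
    rw [hprod]
    refine ih _ ?_ A₂ rfl (by simp [hA₂]; omega) ?_ ?_
    · rw [← hn]
      apply Multiset.card_lt_card
      refine lt_of_le_of_ne ?_ ?_
      · rw [Multiset.le_iff_count]
        intro z
        rw [Multiset.count_sub, Multiset.count_sub]
        rcases hc z with ⟨rfl, h1⟩ | ⟨rfl, h1⟩ | ⟨h1, h2, h3⟩ <;> omega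
      · intro hcon
        have := congrArg (Multiset.count x) hcon
        rw [Multiset.count_sub, Multiset.count_sub] at this
        rcases hc x with ⟨-, h1⟩ | ⟨h1, -⟩ | ⟨h1, -⟩
        · omega
        · exact hxy h1
        · exact h1 rfl
    · intro z
      rcases hc z with ⟨-, h1⟩ | ⟨-, h1⟩ | ⟨-, -, h1⟩
      · rw [h1]; simpa using hmod z
      · have := hmod z
        rw [← h1] at this; simpa using this
      · rw [h1]; exact hmod z
    · intro z
      rcases hc z with ⟨rfl, h1⟩ | ⟨rfl, h1⟩ | ⟨-, -, h1⟩
      · omega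
      · omega
      · rw [h1]; exact hk z

/-! ### Identities of the cyclic semigroup -/

theorem cycReduce_eq_iff (h d a b : ℕ) :
    cycReduce h d a = cycReduce h d b ↔ a = b ∨ (h ≤ a ∧ h ≤ b ∧ a ≡ b [MOD d]) := by
  unfold cycReduce
  by_cases ha : a < h <;> by_cases hb : b < h
  · simp only [ha, hb, if_true]; omega
  · simp only [ha, hb, if_true, if_false]; omega
  · simp only [ha, hb, if_true, if_false]; omega
  · simp only [ha, hb, if_false]
    obtain ⟨a, rfl⟩ : ∃ c, a = h + c := ⟨a - h, by omega⟩
    obtain ⟨b, rfl⟩ : ∃ c, b = h + c := ⟨b - h, by omega⟩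
    have e : h + a ≡ h + b [MOD d] ↔ a % d = b % d :=
      ⟨fun H => Nat.ModEq.add_left_cancel' h H, fun H => Nat.ModEq.add_left h H⟩
    rw [e]
    simp only [Nat.add_sub_cancel_left, Nat.add_left_cancel_iff]
    constructor
    · intro H; right; exact ⟨Nat.le_add_right _ _, Nat.le_add_right _ _, H⟩
    · rintro (rfl | ⟨-, -, H⟩)
      · rfl
      · exact H

theorem cycReduce_mem {h d e : ℕ} (hh : 0 < h) (hd : 0 < d) (he : 1 ≤ e) :
    1 ≤ cycReduce h d e ∧ cycReduce h d e ≤ h + d - 1 := by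
  unfold cycReduce
  have := Nat.mod_lt (e - h) hd
  split_ifs <;> omega

theorem cycReduce_self {h d e : ℕ} (hd : 0 < d) (he : e ≤ h + d - 1) : cycReduce h d e = e := by
  unfold cycReduce
  split_ifs with h1
  · rfl
  · rw [Nat.mod_eq_of_lt (by omega)]; omega

theorem lift_cyc_val (h d : ℕ) [Fact (0 < h)] [Fact (0 < d)] (φ : ℕ → Cyc h d) (w : Word) :
    (FreeSemigroup.lift φ w).1 = cycReduce h d (w.toList.map fun x => (φ x).1).sum := by
  have key : ∀ (l : List ℕ) (s : Cyc h d), (l.foldl (fun s y => s * φ y) s).1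
      = cycReduce h d (s.1 + (l.map fun x => (φ x).1).sum) := by
    intro l
    induction l with
    | nil => intro s; simpa using (cycReduce_self Fact.out s.2.2).symm
    | cons b l ih =>
      intro s
      rw [List.foldl_cons, ih]
      change cycReduce h d (cycReduce h d (s.1 + (φ b).1) + _) = _
      rw [cycReduce_add_left]
      simp [add_assoc]
  rw [lift_eq_foldl, key]
  simp [Word.toList]

theorem cycReduce_sum (h d : ℕ) (e : ℕ → ℕ) (l : List ℕ) :
    cycReduce h d (l.map fun x => cycReduce h d (e x)).sum = cycReduce h d (l.map e).sum := by
  induction l with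
  | nil => rfl
  | cons b l ih =>
    simp only [List.map_cons, List.sum_cons]
    rw [cycReduce_add_left, add_comm, ← cycReduce_add_left, ih, cycReduce_add_left, add_comm]

/-- An identity holds in `C_{h,d}` iff for all positive weights of the letters the total weights
of the two sides are equal, or both are at least `h` and congruent modulo `d`. Weights above
`h + d - 1` are allowed, which is convenient for test substitutions. -/
theorem satisfiesId_cyc_iff (h d : ℕ) [Fact (0 < h)] [Fact (0 < d)] (u v : Word) :
    SatisfiesId (Cyc h d) u v ↔ ∀ e : ℕ → ℕ, (∀ x, 1 ≤ e x) →
      (u.toList.map e).sum = (v.toList.map e).sum ∨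
        (h ≤ (u.toList.map e).sum ∧ h ≤ (v.toList.map e).sum ∧
          (u.toList.map e).sum ≡ (v.toList.map e).sum [MOD d]) := by
  have hh : 0 < h := Fact.out
  have hd : 0 < d := Fact.out
  simp only [← cycReduce_eq_iff]
  constructor
  · intro H e he
    have := congrArg Subtype.val (H fun x => ⟨cycReduce h d (e x), cycReduce_mem hh hd (he x)⟩)
    have hu := lift_cyc_val h d (fun x => ⟨cycReduce h d (e x), cycReduce_mem hh hd (he x)⟩) u
    have hv := lift_cyc_val h d (fun x => ⟨cycReduce h d (e x), cycReduce_mem hh hd (he x)⟩) v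
    rw [cycReduce_sum] at hu hv
    exact hu.symm.trans (this.trans hv)
  · intro H φ
    apply Subtype.ext
    rw [lift_cyc_val, lift_cyc_val]
    exact H _ fun x => (φ x).2.1

theorem sum_map_weight (c t x : ℕ) (l : List ℕ) :
    (l.map fun y => c + if y = x then t else 0).sum = c * l.length + t * l.count x := by
  induction l with
  | nil => simp
  | cons b l ih =>
    by_cases hb : b = x
    · simp [ih, hb]; ring
    · simp [ih, hb]; ring

theorem count_modEq {h d : ℕ} [Fact (0 < h)] [Fact (0 < d)] {u v : Word}
    (H : SatisfiesId (Cyc h d) u v) (x : ℕ) :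
    u.toList.count x ≡ v.toList.count x [MOD d] := by
  have hh : 0 < h := Fact.out
  rw [satisfiesId_cyc_iff] at H
  -- Weights at least `h` force a congruence; raising the weight of `x` by one isolates its count.
  -- The zero increment puts the constant weight into the form used by `sum_map_weight`.
  have h0 := H (fun y => h + if y = x then 0 else 0) (fun y => by omega)
  have h1 := H (fun y => h + if y = x then 1 else 0) (fun y => by omega)
  simp only [sum_map_weight] at h0 h1
  have hmod0 : h * u.toList.length + 0 * u.toList.count x
      ≡ h * v.toList.length + 0 * v.toList.count x [MOD d] := by
    rcases h0 with h0 | h0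
    · rw [h0]
    · exact h0.2.2
  have hmod1 : h * u.toList.length + 1 * u.toList.count x
      ≡ h * v.toList.length + 1 * v.toList.count x [MOD d] := by
    rcases h1 with h1 | h1
    · rw [h1]
    · exact h1.2.2
  simp only [Nat.zero_mul, Nat.add_zero, Nat.one_mul] at hmod0 hmod1
  exact Nat.ModEq.add_left_cancel hmod0 hmod1

/-- Either both sides have length at least `h`, or they share a length `n < h` and each letter has
equal multiplicities or multiplicities at least `h - n` on both sides: give every letter weight
one, then give a single letter weight two. -/
theorem long_or_short {h d : ℕ} [Fact (0 < h)] [Fact (0 < d)] {u v : Word}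
    (H : SatisfiesId (Cyc h d) u v) :
    (h ≤ u.toList.length ∧ h ≤ v.toList.length) ∨
      (u.toList.length = v.toList.length ∧ u.toList.length < h ∧
        ∀ x, u.toList.count x = v.toList.count x ∨
          (h - u.toList.length ≤ u.toList.count x ∧
            h - u.toList.length ≤ v.toList.count x)) := by
  rw [satisfiesId_cyc_iff] at H
  have h0 := H (fun y => 1 + if y = 0 then 0 else 0) (fun y => by omega)
  simp only [sum_map_weight] at h0
  by_cases hu : h ≤ u.toList.length ∧ h ≤ v.toList.length
  · exact Or.inl hu
  · right
    refine ⟨by omega, by omega, fun x => ?_⟩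
    have h1 := H (fun y => 1 + if y = x then 1 else 0) (fun y => by omega)
    simp only [sum_map_weight] at h1
    omega

/-! ### The basis -/

/-- Completeness of the basis, with commutativity built into the type class. -/
theorem satisfiesId_of_basis {S : Type*} [CommSemigroup S] {h d : ℕ} [Fact (0 < h)]
    [Fact (0 < d)] {u v : Word} (H : SatisfiesId (Cyc h d) u v)
    (hΦ : SatisfiesId S (phiLHS h d) (phiRHS h))
    (hΨ : ∀ r : ℕ, 1 ≤ r → r ≤ (h - d) / 3 →
      SatisfiesId S (psiLHS h d r) (psiRHS h d r)) :
    SatisfiesId S u v := by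
  have hh : 0 < h := Fact.out
  have hd : 0 < d := Fact.out
  rw [satisfiesId_iff_withOne]
  intro φ
  set g : ℕ → WithOne S := fun x => (φ x : WithOne S) with hg
  have hmod := count_modEq H
  suffices (((u.toList : Multiset ℕ)).map g).prod = ((v.toList : Multiset ℕ).map g).prod by
    simpa using this
  rcases long_or_short H with ⟨hu, hv⟩ | ⟨huv, hlt, hk⟩
  · have hΦ' : ∀ x (l : Multiset ℕ), l.card = h →
        g x ^ d * (l.map g).prod = (l.map g).prod := by
      intro x l hl
      induction l using Quotient.inductionOn with
      | _ l => simpa using phi_subst hh hd hΦ φ x l (by simpa using hl)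
    have hcount : ∀ x, ((u.toList : Multiset ℕ) ∪ (v.toList : Multiset ℕ)).count x
        = u.toList.count x ∨ ((u.toList : Multiset ℕ) ∪ (v.toList : Multiset ℕ)).count x
        = v.toList.count x := by
      intro x
      rw [Multiset.count_union]
      simpa using max_choice (u.toList.count x) (v.toList.count x)
    -- Both sides are brought to their join as multisets.
    rw [prod_eq_of_le g hΦ' (u.toList ∪ v.toList) _ u.toList rfl Multiset.le_union_left
        (by simpa using hu), prod_eq_of_le g hΦ' (u.toList ∪ v.toList) _ v.toList rfl
        Multiset.le_union_right (by simpa using hv)]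
    · intro x
      rw [Multiset.coe_count]
      rcases hcount x with h1 | h1 <;> rw [h1]
      exact (hmod x).symm
    · intro x
      rw [Multiset.coe_count]
      rcases hcount x with h1 | h1 <;> rw [h1]
      exact hmod x
  · refine prod_eq_of_short g (d := d) (k := h - u.toList.length) (t := u.toList.length) hd ?_
      _ (by simpa using huv.symm) _ _ rfl (by simp) (by simpa using hmod) (by simpa using hk)
    intro hle x y l hl
    induction l using Quotient.inductionOn with
    | _ l =>
      have := psi_subst (by omega) (hΨ (h - u.toList.length) (by omega) (by omega)) φ x y l
        (by simp at hl; omega)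
      simpa using this

theorem length_le_sum (e : ℕ → ℕ) (he : ∀ x, 1 ≤ e x) (l : List ℕ) :
    l.length ≤ (l.map e).sum := by
  induction l with
  | nil => simp
  | cons b l ih => have := he b; simp; omega

theorem cyc_phi (h d : ℕ) [Fact (0 < h)] [Fact (0 < d)] :
    SatisfiesId (Cyc h d) (phiLHS h d) (phiRHS h) := by
  rw [satisfiesId_cyc_iff, phiLHS_toList h d Fact.out, phiRHS_toList h Fact.out]
  intro e he
  right
  have hlen := length_le_sum e he ((List.range h).map (· + 1))
  simp only [List.length_map, List.length_range] at hlen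
  rw [List.map_append, List.sum_append, List.map_replicate, List.sum_replicate, smul_eq_mul]
  refine ⟨by omega, hlen, ?_⟩
  simp [Nat.ModEq]

/-- Writing `i`, `j` for the weights of `x`, `y`: if `i = j`, both sides have the same weight; if
`i ≠ j`, then `i + j ≥ 3`, so that both sides have weight at least `3r + d + (h - 3r - d) ≥ h`. -/
theorem cyc_psi (h d r : ℕ) [Fact (0 < h)] [Fact (0 < d)] (hr : 1 ≤ r) :
    SatisfiesId (Cyc h d) (psiLHS h d r) (psiRHS h d r) := by
  rw [satisfiesId_cyc_iff, psiLHS_toList h d r hr, psiRHS_toList h d r hr]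
  intro e he
  have hlen := length_le_sum e he ((List.range (h - 3 * r - d)).map (· + 2))
  simp only [List.length_map, List.length_range] at hlen
  simp only [List.map_append, List.sum_append, List.map_replicate, List.sum_replicate,
    smul_eq_mul]
  generalize (List.map e ((List.range (h - 3 * r - d)).map (· + 2))).sum = T at *
  have h0 := he 0
  have h1 := he 1
  by_cases heq : e 0 = e 1
  · left; rw [heq]; ring
  · right
    have h3 : r * 3 ≤ r * (e 0 + e 1) := Nat.mul_le_mul_left r (by omega)
    have hd0 : d * 1 ≤ d * e 0 := Nat.mul_le_mul_left d h0
    have hd1 : d * 1 ≤ d * e 1 := Nat.mul_le_mul_left d h1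
    refine ⟨by linarith [show h ≤ 3 * r + d + T by omega],
      by linarith [show h ≤ 3 * r + d + T by omega], ?_⟩
    have a1 : r * e 0 + (r + d) * e 1 + T = (r * e 0 + r * e 1 + T) + d * e 1 := by ring
    have a2 : (r + d) * e 0 + r * e 1 + T = (r * e 0 + r * e 1 + T) + d * e 0 := by ring
    rw [a1, a2]
    simp [Nat.ModEq]

theorem identity_basis_large_index (h d : ℕ) [Fact (0 < h)] [Fact (0 < d)]
    (hhd : d + 2 < h) :
    (SatisfiesId (Cyc h d) commLHS commRHS ∧
      SatisfiesId (Cyc h d) (phiLHS h d) (phiRHS h) ∧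
      ∀ r : ℕ, 1 ≤ r → r ≤ (h - d) / 3 →
        SatisfiesId (Cyc h d) (psiLHS h d r) (psiRHS h d r)) ∧
    (∀ u v : Word, SatisfiesId (Cyc h d) u v →
      ∀ (S : Type u) [Semigroup S], SatisfiesId S commLHS commRHS →
        SatisfiesId S (phiLHS h d) (phiRHS h) →
        (∀ r : ℕ, 1 ≤ r → r ≤ (h - d) / 3 →
          SatisfiesId S (psiLHS h d r) (psiRHS h d r)) →
        SatisfiesId S u v) := by
  refine ⟨⟨?_, cyc_phi h d, fun r hr _ => cyc_psi h d r hr⟩, ?_⟩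
  · rw [satisfiesId_cyc_iff]
    intro e _
    left
    simp [commLHS, commRHS, Word.toList, add_comm]
  · intro u v H S _ hcomm hΦ hΨ
    let _ : CommSemigroup S :=
      { ‹Semigroup S› with
        mul_comm := fun a b => by
          simpa [lift_eq_foldl, commLHS, commRHS] using
            hcomm fun i => if i = 0 then a else b }
    exact satisfiesId_of_basis H hΦ hΨ
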